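/- Let σ be a sequence over a finite semigroup Γ, let k be at least the number of elements of Γ, and let n₀ < n₁ < ⋯ < n_k be natural numbers. Then there exist indices i < j ≤ k such that n_i merges with n_j in σ. -/

import Mathlib

namespace Buechi

/-- Nonempty finite strings over `α`, given as a head together with a tail. -/
abbrev NStr (α : Type*) : Type _ := α × List α

/-- The list of symbols of a nonempty string. -/
def NStr.toList {α : Type*} (s : NStr α) : List α := s.1 :: s.2

/-- The color of a nonempty string over a semigroup: the product of its symbols. -/
def col {Γ : Type*} [Semigroup Γ] (s : NStr Γ) : Γ := s.2.foldl (· * ·) s.1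

/-- The string `σ[i,j) = σ i, σ (i+1), …, σ (j-1)` (meaningful for `i < j`). -/
def seg {α : Type*} (σ : ℕ → α) (i j : ℕ) : NStr α :=
  (σ i, (List.range' (i + 1) (j - i - 1)).map σ)

/-- Position `i` merges with position `j` in `σ`: there is a `k` with `i < k`,
`j < k` and `col σ[i,k) = col σ[j,k)`. -/
def Merges {Γ : Type*} [Semigroup Γ] (σ : ℕ → Γ) (i j : ℕ) : Prop :=
  ∃ k, i < k ∧ j < k ∧ col (seg σ i k) = col (seg σ j k)

theorem Merges.symm {Γ : Type*} [Semigroup Γ] {σ : ℕ → Γ} {i j : ℕ} (h : Merges σ i j) :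
    Merges σ j i := by
  obtain ⟨l, hil, hjl, hcol⟩ := h
  exact ⟨l, hjl, hil, hcol.symm⟩

-- Pigeonhole on the colors of `σ[n i, l)`, for a single endpoint `l` beyond all the `n i`.
theorem exists_ne_merges_of_card_lt {Γ ι : Type*} [Fintype Γ] [Semigroup Γ] (σ : ℕ → Γ)
    (n : ι → ℕ) {s : Finset ι} (hs : Fintype.card Γ < s.card) :
    ∃ i ∈ s, ∃ j ∈ s, i ≠ j ∧ Merges σ (n i) (n j) := by
  let l := s.sup n + 1
  have n_lt_l {i : ι} (hi : i ∈ s) : n i < l := Nat.lt_succ_of_le (Finset.le_sup hi)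
  obtain ⟨i, hi, j, hj, hij, hcol⟩ :=
    Finset.exists_ne_map_eq_of_card_lt_of_maps_to (t := Finset.univ) hs
      (f := fun i ↦ col (seg σ (n i) l)) (fun _ _ ↦ Finset.mem_univ _)
  exact ⟨i, hi, j, hj, hij, l, n_lt_l hi, n_lt_l hj, hcol⟩

theorem merging_positions_exist_general {Γ ι : Type*} [Fintype Γ] [Semigroup Γ] [LinearOrder ι]
    (σ : ℕ → Γ) (n : ι → ℕ) {s : Finset ι} (hs : Fintype.card Γ < s.card) :
    ∃ i ∈ s, ∃ j ∈ s, i < j ∧ Merges σ (n i) (n j) := by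
  obtain ⟨i, hi, j, hj, hij, hmerge⟩ := exists_ne_merges_of_card_lt σ n hs
  rcases hij.lt_or_gt with hlt | hgt
  · exact ⟨i, hi, j, hj, hlt, hmerge⟩
  · exact ⟨j, hj, i, hi, hgt, hmerge.symm⟩

/-- Among `k + 1` increasing positions `n 0 < n 1 < ⋯ < n k` with
`k ≥ |Γ|`, two of them merge in `σ`. -/
theorem merging_positions_exist {Γ : Type*} [Fintype Γ] [Semigroup Γ]
    (σ : ℕ → Γ) (k : ℕ) (hk : Fintype.card Γ ≤ k)
    (n : ℕ → ℕ) (hmono : ∀ i, i < k → n i < n (i + 1)) :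
    ∃ i j : ℕ, i < j ∧ j ≤ k ∧ Merges σ (n i) (n j) := by
  obtain ⟨i, -, j, hj, hij, hmerge⟩ := merging_positions_exist_general σ n
    (s := Finset.range (k + 1)) ((Nat.lt_succ_of_le hk).trans_eq (Finset.card_range _).symm)
  exact ⟨i, j, hij, Finset.mem_range_succ_iff.mp hj, hmerge⟩

end Buechi
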